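/- arXiv:2008.00755 — 2 statements merged into one kernel-verified Lean document; each statement's English description precedes it below -/
import Mathlib

section
/- Let Γ be a finite simple group and G = Γ^ℕ the full one-sided group shift on Γ. If N is a proper closed σ-stable normal subgroup of G, then N is finite, and the quotient G/N (with the quotient topology and induced endomorphism) is isomorphic, as an expansive profinite group, to Γ^ℕ. -/
open Function Set

/-- The shift map on the full one-sided group shift `Γ^ℕ`, as a group homomorphism. -/
def shiftHom (Γ : Type*) [Group Γ] : (ℕ → Γ) →* (ℕ → Γ) where
  toFun a := fun n => a (n + 1)
  map_one' := rfl
  map_mul' _ _ := rfl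

theorem fs_shift_mem {Γ : Type*} [Group Γ] (N : Subgroup (ℕ → Γ))
    (hst : ∀ g ∈ N, shiftHom Γ g ∈ N) (n : ℕ) :
    ∀ g ∈ N, (fun i => g (n + i)) ∈ N := by
  induction n with
  | zero => intro g hg; simpa using hg
  | succ n ih =>
    intro g hg
    have h := hst _ (ih g hg)
    have e : shiftHom Γ (fun i => g (n + i)) = fun i => g (n + 1 + i) := by
      funext i
      show g (n + (i + 1)) = _
      congr 1; omega
    rwa [e] at h

/-- leading coefficients -/
def fsLead {Γ : Type*} [Group Γ] (N : Subgroup (ℕ → Γ)) (k : ℕ) : Subgroup Γ where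
  carrier := {x | ∃ a ∈ N, (∀ i < k, a i = 1) ∧ a k = x}
  one_mem' := ⟨1, N.one_mem, fun _ _ => rfl, rfl⟩
  mul_mem' := by
    rintro x y ⟨a, ha, ha1, rfl⟩ ⟨b, hb, hb1, rfl⟩
    exact ⟨a * b, N.mul_mem ha hb, fun i hi => by simp [ha1 i hi, hb1 i hi], rfl⟩
  inv_mem' := by
    rintro x ⟨a, ha, ha1, rfl⟩
    exact ⟨a⁻¹, N.inv_mem ha, fun i hi => by simp [ha1 i hi], rfl⟩

theorem fsLead_normal {Γ : Type*} [Group Γ] (N : Subgroup (ℕ → Γ)) [hN : N.Normal] (k : ℕ) :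
    (fsLead N k).Normal := by
  constructor
  rintro x ⟨a, ha, ha1, rfl⟩ y
  exact ⟨_, hN.conj_mem a ha (fun _ => y), fun i hi => by simp [ha1 i hi], rfl⟩

theorem fsLead_anti {Γ : Type*} [Group Γ] (N : Subgroup (ℕ → Γ))
    (hst : ∀ g ∈ N, shiftHom Γ g ∈ N) (k : ℕ) : fsLead N (k + 1) ≤ fsLead N k := by
  rintro x ⟨a, ha, ha1, rfl⟩
  exact ⟨_, hst a ha, fun i hi => ha1 (i + 1) (by omega), rfl⟩

theorem fs_approx {Γ : Type*} [Group Γ] (N : Subgroup (ℕ → Γ)) (r : ℕ)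
    (h : ∀ k < r, fsLead N k = ⊤) (g : ℕ → Γ) : ∃ a ∈ N, ∀ i < r, a i = g i := by
  induction r with
  | zero => exact ⟨1, N.one_mem, by simp⟩
  | succ r ih =>
    obtain ⟨a, ha, hag⟩ := ih (fun k hk => h k (by omega))
    have : (a r)⁻¹ * g r ∈ fsLead N r := by rw [h r (by omega)]; trivial
    obtain ⟨c, hc, hc1, hcr⟩ := this
    refine ⟨a * c, N.mul_mem ha hc, fun i hi => ?_⟩
    rcases Nat.lt_succ_iff_lt_or_eq.mp hi with hi | rfl
    · simp [hc1 i hi, hag i hi]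
    · simp [hcr]

theorem fs_exists_r {Γ : Type*} [Group Γ] [IsSimpleGroup Γ]
    [TopologicalSpace Γ]
    (N : Subgroup (ℕ → Γ)) [hNnormal : N.Normal]
    (hNproper : N ≠ ⊤) (hNclosed : IsClosed (N : Set (ℕ → Γ)))
    (hst : ∀ g ∈ N, shiftHom Γ g ∈ N) :
    ∃ r, (∀ g : ℕ → Γ, ∃ a ∈ N, ∀ i < r, a i = g i) ∧
      ∀ a ∈ N, (∀ i < r, a i = 1) → a = 1 := by
  classical
  have hex : ∃ k, fsLead N k ≠ ⊤ := by
    by_contra! hall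
    apply hNproper
    rw [eq_top_iff]
    intro g _
    choose u hu hug using fun k => fs_approx N k (fun j _ => hall j) g
    refine hNclosed.mem_of_tendsto (f := u) (b := Filter.atTop) ?_ (Filter.Eventually.of_forall hu)
    rw [tendsto_pi_nhds]
    intro i
    apply tendsto_const_nhds.congr'
    filter_upwards [Filter.eventually_gt_atTop i] with k hk
    exact (hug k i hk).symm
  refine ⟨Nat.find hex, fs_approx N _ fun k hk => by simpa using Nat.find_min hex hk, ?_⟩
  have hbot : ∀ m, fsLead N (Nat.find hex + m) = ⊥ := by
    intro m
    induction m with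
    | zero =>
      exact ((fsLead_normal N _).eq_bot_or_eq_top).resolve_right (Nat.find_spec hex)
    | succ m ih => exact le_bot_iff.mp (ih ▸ fsLead_anti N hst _)
  intro a ha h1
  funext k
  induction k using Nat.strong_induction_on with
  | _ k ih =>
    rcases lt_or_ge k (Nat.find hex) with hk | hk
    · exact h1 k hk
    · obtain ⟨m, rfl⟩ := Nat.exists_eq_add_of_le hk
      have : a (Nat.find hex + m) ∈ fsLead N (Nat.find hex + m) := ⟨a, ha, fun i hi => ih i hi, rfl⟩
      rw [hbot] at this
      exact this

/-- solving the recursion -/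
def fsSol {Γ : Type*} [Group Γ] (r : ℕ) (f : (ℕ → Γ) → Γ) (b : ℕ → Γ) : ℕ → Γ
  | m => if hm : r ≤ m then
      f (fun i => if hi : i < r then fsSol r f b (m - r + i) else 1) * b (m - r) else 1
  termination_by m => m
  decreasing_by omega

theorem fsSol_eq {Γ : Type*} [Group Γ] (r : ℕ) (f : (ℕ → Γ) → Γ) (b : ℕ → Γ) (n : ℕ) :
    fsSol r f b (n + r) = f (fun i => if i < r then fsSol r f b (n + i) else 1) * b n := by
  rw [fsSol]
  simp

/-- Let `Γ` be a finite simple group and `G = Γ^ℕ` the full one-sided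
group shift on `Γ`. If `N` is a proper closed shift-stable normal subgroup of `G`, then
`N` is finite, and the quotient `G/N` (with the quotient topology and the induced
endomorphism) is isomorphic, as an expansive profinite group, to `Γ^ℕ`. -/
theorem proper_normal_subgroup_of_simple_full_shift
    {Γ : Type*} [Group Γ] [Finite Γ] [IsSimpleGroup Γ]
    [TopologicalSpace Γ] [DiscreteTopology Γ]
    (N : Subgroup (ℕ → Γ)) [hNnormal : N.Normal]
    (hNproper : N ≠ ⊤) (hNclosed : IsClosed (N : Set (ℕ → Γ)))
    (hNstable : ∀ g ∈ N, shiftHom Γ g ∈ N) :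
    (N : Set (ℕ → Γ)).Finite ∧
    ∃ σbar : (ℕ → Γ) ⧸ N →* (ℕ → Γ) ⧸ N,
      (∀ g : ℕ → Γ, σbar ((g : (ℕ → Γ) ⧸ N)) = ((shiftHom Γ g : ℕ → Γ) : (ℕ → Γ) ⧸ N)) ∧
      ∃ e : ((ℕ → Γ) ⧸ N) ≃* (ℕ → Γ),
        Continuous e ∧ Continuous e.symm ∧
        ∀ q : (ℕ → Γ) ⧸ N, e (σbar q) = shiftHom Γ (e q) := by
  classical
  obtain ⟨r, hsur, hinj⟩ := fs_exists_r N hNproper hNclosed hNstable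
  have huniq : ∀ a ∈ N, ∀ b ∈ N, (∀ i < r, a i = b i) → a = b := by
    intro a ha b hb h
    have := hinj (a * b⁻¹) (N.mul_mem ha (N.inv_mem hb)) (fun i hi => by simp [h i hi])
    exact mul_inv_eq_one.mp this
  choose s hsN hs using hsur
  have hsmul : ∀ a b, s (a * b) = s a * s b := fun a b =>
    huniq _ (hsN _) _ (N.mul_mem (hsN _) (hsN _)) fun i hi => by
      simp [hs _ i hi]
  have hsfix : ∀ a ∈ N, s a = a := fun a ha => huniq _ (hsN _) _ ha (hs a)
  have hscongr : ∀ a b, (∀ i < r, a i = b i) → s a = s b := fun a b h =>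
    huniq _ (hsN _) _ (hsN _) fun i hi => by rw [hs _ i hi, hs _ i hi, h i hi]
  have hcent : ∀ a y, y * s a r = s a r * y := by
    intro a y
    have h := huniq _ (hNnormal.conj_mem _ (hsN a) (Pi.mulSingle r y)) _ (hsN a) (fun i hi => by
      have : i ≠ r := by omega
      simp [Pi.mulSingle_eq_of_ne this])
    have h2 := congrFun h r
    simp only [Pi.mul_apply, Pi.inv_apply, Pi.mulSingle_eq_same] at h2
    exact mul_inv_eq_iff_eq_mul.mp h2
  let φ : (ℕ → Γ) →* (ℕ → Γ) := MonoidHom.mk' (fun a n => (s (fun i => a (n + i)) r)⁻¹ * a (n + r)) (by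
    intro a b
    funext n
    have h := hsmul (fun i => a (n + i)) (fun i => b (n + i))
    have e : (fun i => (a * b) (n + i)) = (fun i => a (n + i)) * (fun i => b (n + i)) := rfl
    have hc := hcent (fun i => b (n + i))
    simp only [Pi.mul_apply] at *
    rw [e, h, Pi.mul_apply, mul_inv_rev]
    generalize s (fun i => a (n + i)) r = x at *
    generalize s (fun i => b (n + i)) r = z at *
    have h1 : ∀ y, z⁻¹ * y = y * z⁻¹ := fun y => by
      rw [inv_mul_eq_iff_eq_mul, ← mul_assoc, ← hc y, mul_inv_cancel_right]
    rw [h1, mul_assoc, mul_assoc, ← mul_assoc z⁻¹, h1 (a (n + r))]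
    simp only [mul_assoc])
  have hφ : ∀ a n, φ a n = (s (fun i => a (n + i)) r)⁻¹ * a (n + r) := fun _ _ => rfl
  have hker : φ.ker = N := by
    ext a
    rw [MonoidHom.mem_ker]
    constructor
    · intro h
      have hrec : ∀ n, s (fun i => a (n + i)) r = a (n + r) := fun n => by
        have := congrFun h n
        rw [hφ] at this
        exact inv_mul_eq_one.mp this
      have : s a = a := by
        funext k
        induction k using Nat.strong_induction_on with
        | _ k ih =>
          rcases lt_or_ge k r with hk | hk
          · exact hs a k hk
          · obtain ⟨n, rfl⟩ := Nat.exists_eq_add_of_le' hk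
            rw [← hrec n]
            have := huniq _ (hsN (fun i => a (n + i))) _ (fs_shift_mem N hNstable n _ (hsN a))
              (fun i hi => by rw [hs _ i hi, ih (n + i) (by omega)])
            rw [this]
      rw [← this]; exact hsN a
    · intro h
      funext n
      rw [hφ, hsfix _ (fs_shift_mem N hNstable n a h)]
      simp
  have hφsurj : Surjective φ := by
    intro b
    refine ⟨fsSol r (fun a => s a r) b, ?_⟩
    funext n
    rw [hφ, fsSol_eq, hscongr (fun i => if i < r then fsSol r (fun a => s a r) b (n + i) else 1)
      (fun i => fsSol r (fun a => s a r) b (n + i)) (fun i hi => by simp [hi])]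
    simp
  have hscont : Continuous (fun a => s a r) := by
    have h1 : Continuous (fun c : Fin r → Γ => s (fun i => if h : i < r then c ⟨i, h⟩ else 1) r) :=
      continuous_of_discreteTopology
    have h2 : Continuous (fun (a : ℕ → Γ) (i : Fin r) => a i) := by fun_prop
    convert h1.comp h2 using 2 with a
    exact congrFun (hscongr _ _ fun i hi => by simp [hi]) r
  have hφcont : Continuous φ := by
    refine continuous_pi fun n => ?_
    simp only [hφ]
    have h2 : Continuous (fun (a : ℕ → Γ) (i : ℕ) => a (n + i)) := by fun_prop
    have h3 := hscont.comp h2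
    have h4 : Continuous (fun a : ℕ → Γ => a (n + r)) := by fun_prop
    have h5 : Continuous (fun p : Γ × Γ => p.1⁻¹ * p.2) := continuous_of_discreteTopology
    exact h5.comp (h3.prodMk h4)
  refine ⟨?_, QuotientGroup.map N N (shiftHom Γ) hNstable, fun g => rfl, ?_⟩
  · refine Set.Finite.of_finite_image (f := fun (a : ℕ → Γ) (i : Fin r) => a i)
      (Set.toFinite _) ?_
    intro a ha b hb h
    exact huniq a ha b hb fun i hi => congrFun h ⟨i, hi⟩
  · let ψ : (ℕ → Γ) ⧸ N →* (ℕ → Γ) := QuotientGroup.lift N φ hker.ge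
    have hψ : Bijective ψ := by
      constructor
      · rw [← MonoidHom.ker_eq_bot_iff, eq_bot_iff]
        intro q
        induction q using QuotientGroup.induction_on with
        | H g =>
          intro hg
          have : g ∈ φ.ker := hg
          rw [hker] at this
          exact (QuotientGroup.eq_one_iff g).mpr this
      · intro b
        obtain ⟨a, ha⟩ := hφsurj b
        exact ⟨(a : (ℕ → Γ) ⧸ N), ha⟩
    have hψc : Continuous ψ := hφcont.quotient_lift _
    let e := MulEquiv.ofBijective ψ hψ
    have hc : CompactSpace ((ℕ → Γ) ⧸ N) := Quotient.compactSpace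
    have hec : Continuous e.toEquiv := hψc
    refine ⟨e, hψc, (Continuous.homeoOfEquivCompactToT2 hec).symm.continuous, ?_⟩
    intro q
    induction q using QuotientGroup.induction_on with
    | H g =>
      show φ (shiftHom Γ g) = shiftHom Γ (φ g)
      funext n
      show (s (fun i => g (n + i + 1)) r)⁻¹ * g (n + r + 1) =
        (s (fun i => g (n + 1 + i)) r)⁻¹ * g (n + 1 + r)
      have e1 : (fun i => g (n + i + 1)) = fun i => g (n + 1 + i) := by
        funext i; congr 1; omega
      rw [e1]
      congr 2; omega
end

section
/- Let L/K be a Galois extension of fields (normal and separable, possibly infinite), let σ : L → L be a ring endomorphism with σ(K) ⊆ K, and let G = Gal(L/K) be the Galois group with the Krull topology. Then: (i) for every g ∈ G there exists a unique element g^σ ∈ G with σ ∘ g^σ = g ∘ σ as maps L → L; (ii) the map G → G, g ↦ g^σ, is a continuous group homomorphism; (iii) this endomorphism is expansive — i.e., there exists an open subgroup U of G with ⋂_{n∈ℕ} (g ↦ g^σ)⁻ⁿ(U) = {1} — if and only if L/K is finitely σ-generated, i.e., L = K(⋃_{n∈ℕ} σⁿ(A)) for some finite subset A ⊆ L. -/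
open Function Set

theorem gal_sigma_aux {K L M : Type*} [Field K] [Field L] [Field M] [Algebra K L]
    [Normal K L] (σ : L →+* M) (g : M ≃+* M)
    (hg : ∀ x : K, g (σ (algebraMap K L x)) = σ (algebraMap K L x)) :
    ∃ h : L ≃ₐ[K] L, ∀ x, σ (h x) = g (σ x) := by
  letI : Algebra K M := (σ.comp (algebraMap K L)).toAlgebra
  letI : Algebra L M := σ.toAlgebra
  haveI : IsScalarTower K L M := IsScalarTower.of_algebraMap_eq (fun x => rfl)
  let g' : M ≃ₐ[K] M := AlgEquiv.ofRingEquiv (f := g) hg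
  exact ⟨g'.restrictNormal L, fun x => g'.restrictNormal_commutes L x⟩

theorem gal_sigma_exists {K L : Type*} [Field K] [Field L] [Algebra K L] [IsGalois K L]
    (σ : L →+* L)
    (hσK : ∀ x : K, ∃ y : K, σ (algebraMap K L x) = algebraMap K L y) (g : L ≃ₐ[K] L) :
    ∃ h : L ≃ₐ[K] L, ∀ x : L, σ (h x) = g (σ x) := by
  refine gal_sigma_aux σ g.toRingEquiv (fun x => ?_)
  obtain ⟨y, hy⟩ := hσK x
  rw [hy]
  exact g.commutes y

theorem gal_sigma_fix {K L : Type*} [Field K] [Field L] [Algebra K L] (S : Set L)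
    (g : L ≃ₐ[K] L) :
    g ∈ (IntermediateField.adjoin K S).fixingSubgroup ↔ ∀ x ∈ S, g x = x := by
  rw [IntermediateField.mem_fixingSubgroup_iff]
  refine ⟨fun h x hx => h x (IntermediateField.subset_adjoin K S hx), fun h x hx => ?_⟩
  have : IntermediateField.adjoin K S ≤ IntermediateField.fixedField (Subgroup.zpowers g) := by
    rw [IntermediateField.adjoin_le_iff]
    intro y hy
    rw [SetLike.mem_coe, IntermediateField.mem_fixedField_iff]
    intro f hf
    have : Subgroup.zpowers g ≤ MulAction.stabilizer (L ≃ₐ[K] L) y := by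
      rw [Subgroup.zpowers_le]
      exact h y hy
    exact this hf
  have h2 := this hx
  rw [IntermediateField.mem_fixedField_iff] at h2
  exact h2 g (Subgroup.mem_zpowers g)

theorem gal_sigma_open {K L : Type*} [Field K] [Field L] [Algebra K L] [IsGalois K L]
    (S : Set L) (hS : S.Finite) :
    IsOpen ((IntermediateField.adjoin K S).fixingSubgroup : Set (L ≃ₐ[K] L)) := by
  have : FiniteDimensional K (IntermediateField.adjoin K S) := by
    have := hS.to_subtype
    exact IntermediateField.finiteDimensional_adjoin
      (fun x _ => Algebra.IsIntegral.isIntegral x)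
  exact IntermediateField.fixingSubgroup_isOpen _

theorem gal_sigma_nhds {K L : Type*} [Field K] [Field L] [Algebra K L]
    (V : Set (L ≃ₐ[K] L)) (hV : V ∈ nhds 1) :
    ∃ S : Finset L, ((IntermediateField.adjoin K (S : Set L)).fixingSubgroup :
      Set (L ≃ₐ[K] L)) ⊆ V := by
  obtain ⟨E, hE, hEV⟩ := (krullTopology_mem_nhds_one_iff K L V).1 hV
  obtain ⟨S, hS⟩ := (IntermediateField.essFiniteType_iff (K := E)).1 inferInstance
  exact ⟨S, by rw [hS]; exact hEV⟩

/-- Let `L/K` be a (possibly infinite) Galois extension of fields, and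
let `σ : L → L` be a ring endomorphism with `σ(K) ⊆ K`. Let `G = Gal(L/K)` be the Galois
group with the Krull topology. Then:
(i) for every `g ∈ G` there is a unique `g^σ ∈ G` with `σ ∘ g^σ = g ∘ σ`;
(ii) the map `g ↦ g^σ` is a continuous group homomorphism `G → G`;
(iii) this endomorphism is expansive — there is an open subgroup `U ≤ G` with
`⋂ₙ (g ↦ g^σ)⁻ⁿ(U) = {1}` — if and only if `L/K` is finitely σ-generated, i.e.
`L = K(⋃ₙ σⁿ(A))` for some finite `A ⊆ L`. -/
theorem galois_group_sigma_endomorphism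
    {K L : Type*} [Field K] [Field L] [Algebra K L] [IsGalois K L]
    (σ : L →+* L)
    (hσK : ∀ x : K, ∃ y : K, σ (algebraMap K L x) = algebraMap K L y) :
    (∀ g : L ≃ₐ[K] L, ∃! h : L ≃ₐ[K] L, ∀ x : L, σ (h x) = g (σ x)) ∧
    ∃ τ : (L ≃ₐ[K] L) → (L ≃ₐ[K] L),
      (∀ g : L ≃ₐ[K] L, ∀ x : L, σ (τ g x) = g (σ x)) ∧
      Continuous τ ∧
      (∀ a b : L ≃ₐ[K] L, τ (a * b) = τ a * τ b) ∧
      ((∃ U : Subgroup (L ≃ₐ[K] L), IsOpen (U : Set (L ≃ₐ[K] L)) ∧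
          (⋂ n : ℕ, τ^[n] ⁻¹' (U : Set (L ≃ₐ[K] L))) = ({1} : Set (L ≃ₐ[K] L))) ↔
        ∃ A : Finset L,
          IntermediateField.adjoin K (⋃ n : ℕ, (⇑σ)^[n] '' (A : Set L)) = ⊤) := by
  have hex := gal_sigma_exists σ hσK
  refine ⟨fun g => ?_, ?_⟩
  · obtain ⟨h, hh⟩ := hex g
    refine ⟨h, hh, fun h' hh' => ?_⟩
    ext x
    exact σ.injective ((hh' x).trans (hh x).symm)
  choose τ hτ using hex
  have hmul : ∀ a b : L ≃ₐ[K] L, τ (a * b) = τ a * τ b := by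
    intro a b
    ext x
    apply σ.injective
    rw [hτ, AlgEquiv.mul_apply, AlgEquiv.mul_apply, hτ, hτ]
  let τ' : (L ≃ₐ[K] L) →* (L ≃ₐ[K] L) := MonoidHom.mk' τ hmul
  have hone : τ 1 = 1 := τ'.map_one
  have hfix : ∀ (n : ℕ) (g : L ≃ₐ[K] L) (x : L), τ^[n] g x = x ↔ g (σ^[n] x) = σ^[n] x := by
    intro n
    induction n with
    | zero => intro g x; rfl
    | succ n ih =>
      intro g x
      rw [Function.iterate_succ_apply, ih, Function.iterate_succ_apply', ← hτ]
      exact σ.injective.eq_iff.symm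
  refine ⟨τ, hτ, ?_, hmul, ?_⟩
  · change Continuous τ'
    apply continuous_of_continuousAt_one
    intro V hV
    rw [map_one] at hV
    obtain ⟨S, hS⟩ := gal_sigma_nhds V hV
    rw [Filter.mem_map]
    refine Filter.mem_of_superset ((gal_sigma_open (K := K) (σ '' S)
      (S.finite_toSet.image σ)).mem_nhds (one_mem _)) ?_
    intro g hg
    rw [SetLike.mem_coe, gal_sigma_fix] at hg
    apply hS
    rw [SetLike.mem_coe, gal_sigma_fix]
    intro x hx
    exact (hfix 1 g x).2 (hg _ ⟨x, hx, rfl⟩)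
  · constructor
    · rintro ⟨U, hU, hU1⟩
      obtain ⟨S, hS⟩ := gal_sigma_nhds (U : Set (L ≃ₐ[K] L)) (hU.mem_nhds (one_mem _))
      refine ⟨S, ?_⟩
      have : (IntermediateField.adjoin K (⋃ n : ℕ, (⇑σ)^[n] '' (S : Set L))).fixingSubgroup
          = ⊥ := by
        rw [eq_bot_iff]
        intro g hg
        rw [gal_sigma_fix] at hg
        rw [Subgroup.mem_bot, ← Set.mem_singleton_iff, ← hU1, Set.mem_iInter]
        intro n
        apply hS
        rw [SetLike.mem_coe, gal_sigma_fix]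
        intro x hx
        exact (hfix n g x).2 (hg _ (Set.mem_iUnion.2 ⟨n, x, hx, rfl⟩))
      rw [← InfiniteGalois.fixedField_fixingSubgroup
        (IntermediateField.adjoin K (⋃ n : ℕ, (⇑σ)^[n] '' (S : Set L))), this]
      rw [eq_top_iff]
      intro x _
      rw [IntermediateField.mem_fixedField_iff]
      intro f hf
      rw [Subgroup.mem_bot.1 hf]; rfl
    · rintro ⟨A, hA⟩
      refine ⟨(IntermediateField.adjoin K (A : Set L)).fixingSubgroup,
        gal_sigma_open _ A.finite_toSet, ?_⟩
      ext g
      rw [Set.mem_iInter, Set.mem_singleton_iff]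
      constructor
      · intro h
        have : g ∈ (IntermediateField.adjoin K
            (⋃ n : ℕ, (⇑σ)^[n] '' (A : Set L))).fixingSubgroup := by
          rw [gal_sigma_fix]
          intro y hy
          obtain ⟨n, x, hx, rfl⟩ := Set.mem_iUnion.1 hy
          have h2 := h n
          rw [Set.mem_preimage, SetLike.mem_coe, gal_sigma_fix] at h2
          exact (hfix n g x).1 (h2 x hx)
        rw [hA, IntermediateField.mem_fixingSubgroup_iff] at this
        ext x
        exact this x IntermediateField.mem_top
      · rintro rfl n
        rw [Set.mem_preimage, Function.iterate_fixed hone]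
        exact one_mem _
end
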